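/- Let d ≥ 1, δ ∈ (0,1], M ≥ 0 and ε > 0. Let μ be a finite Borel measure on ℝ^d × ℝ^d with total mass m = μ(ℝ^{2d}), and let ν be a Borel probability measure on ℝ^d with ∫ ‖ξ‖^{2+δ} dν(ξ) < ∞. Let θ : ℝ^d → [0,1], S : ℝ^d × ℝ^d → ℝ^d and H : (ℝ^d × ℝ^d) × (ℝ^d × ℝ^d) → ℝ^d be measurable with ∫ ‖S(x,v)‖^{2+δ} dμ(x,v) < ∞ and ∫∫ ‖H(x,v,x̂,v̂)‖^{2+δ} dμ(x,v) dμ(x̂,v̂) < ∞. Let φ : ℝ^d × ℝ^d → ℝ be such that for every x the map v ↦ φ(x,v) is twice differentiable and, uniformly in x, its second derivative satisfies ‖D²_v φ(x,v) − D²_v φ(x,w)‖ ≤ M‖v − w‖^δ (operator norm of bilinear maps) for all v, w. Define the post-interaction velocity v* = v + ε(θ(x) ξ + S(x,v) + m H(x,v,x̂,v̂)). Then the Taylor remainder R = ∫_{ℝ^d} ∫∫ [φ(x,v*) − φ(x,v) − D_v φ(x,v)(v* − v) − (1/2) D²_v φ(x,v)(v* − v, v* − v)] dμ(x̂,v̂)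 dμ(x,v) dν(ξ) satisfies |R| ≤ 2^{1+2δ} M ε^{2+δ} ( m² ∫ ‖ξ‖^{2+δ} dν(ξ) + m ∫ ‖S‖^{2+δ} dμ + m^{2+δ} ∫∫ ‖H‖^{2+δ} dμ dμ ). -/

import Mathlib

/-!
Along the segment from `v` to `v + h`, the mean value inequality applied to `D_vφ` and the Hölder
bound on `D²_vφ` give `‖D_vφ(v + th) - D_vφ(v) - t D²_vφ(v) h‖ ≤ t M ‖h‖^(1+δ)`. Hence the
derivative in `t` of the Taylor remainder with increment `t h` is at most `t M ‖h‖^(2+δ)`, so the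
remainder is at most `(1/2) M ‖h‖^(2+δ)` (`abs_taylorRem_le`).

For `h = ε(θξ + S + mH)`, convexity of `t ↦ t^(2+δ)` splits `‖h‖^(2+δ)` into three terms at the cost
of `3^(1+δ)`, and `(1/2) 3^(1+δ) ≤ 2^(1+2δ)` (`abs_taylorRem_interaction_le`). Integrating this
majorant gives the theorem. The integrand itself need not be measurable: the bound
`norm_integral_le_of_norm_le` only asks that the majorant be integrable.
-/

open MeasureTheory

/-- `ℝ^d`. -/
abbrev Rd (d : ℕ) := EuclideanSpace ℝ (Fin d)

/-- Second-order Taylor remainder of `v ↦ φ(x,v)` at `v` with increment `h`. -/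
noncomputable def taylorRem {d : ℕ} (φ : Rd d × Rd d → ℝ) (x v h : Rd d) : ℝ :=
  φ (x, v + h) - φ (x, v) - fderiv ℝ (fun u => φ (x, u)) v h
    - (1 / 2) * fderiv ℝ (fderiv ℝ (fun u => φ (x, u))) v h h

/-- The constant `1/2` (rather than `1`) is needed to absorb the factor `3^(1+δ)` later on. -/
theorem abs_taylorRem_le {d : ℕ} {δ M : ℝ} (hδ : 0 < δ) (hM : 0 ≤ M)
    (φ : Rd d × Rd d → ℝ) (x : Rd d)
    (hφ : Differentiable ℝ (fun v => φ (x, v)))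
    (hφ' : Differentiable ℝ (fderiv ℝ (fun v => φ (x, v))))
    (hHolder : ∀ v w,
      ‖fderiv ℝ (fderiv ℝ (fun u => φ (x, u))) v -
        fderiv ℝ (fderiv ℝ (fun u => φ (x, u))) w‖ ≤ M * ‖v - w‖ ^ δ) (v h : Rd d) :
    |taylorRem φ x v h| ≤ 1 / 2 * M * ‖h‖ ^ (2 + δ) := by
  set f : Rd d → ℝ := fun u => φ (x, u) with hf
  set A := fderiv ℝ f with hA
  set B := fderiv ℝ A v with hB
  have hfirst : ∀ t ∈ Set.Icc (0 : ℝ) 1,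
      ‖A (v + t • h) - A v - B (t • h)‖ ≤ M * ‖h‖ ^ δ * (t * ‖h‖) := by
    intro t ht
    have key := (convex_segment (𝕜 := ℝ) v (v + t • h)).norm_image_sub_le_of_norm_hasFDerivWithin_le'
      (f := A) (f' := fun y => fderiv ℝ A y) (φ := B) (C := M * ‖h‖ ^ δ)
      (fun y _ => (hφ' y).hasFDerivAt.hasFDerivWithinAt)
      (fun y hy => by
        refine (hHolder y v).trans ?_
        rw [segment_eq_image'] at hy
        obtain ⟨s, hs, rfl⟩ := hy
        have h1 : ‖v + s • (v + t • h - v) - v‖ ≤ ‖h‖ := by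
          rw [add_sub_cancel_left, add_sub_cancel_left, smul_smul, norm_smul, Real.norm_eq_abs,
            abs_of_nonneg (mul_nonneg hs.1 ht.1)]
          exact mul_le_of_le_one_left (norm_nonneg _) (mul_le_one₀ hs.2 ht.1 ht.2)
        gcongr)
      (left_mem_segment ℝ v (v + t • h)) (right_mem_segment ℝ v (v + t • h))
    rwa [add_sub_cancel_left, norm_smul, Real.norm_eq_abs, abs_of_nonneg ht.1] at key
  set g : ℝ → ℝ := fun t => f (v + t • h) - f v - t * A v h - t ^ 2 / 2 * B h h with hg
  have hsq : ∀ t : ℝ, HasDerivAt (fun t : ℝ => t ^ 2 / 2) t t := by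
    intro t
    simpa using (hasDerivAt_pow 2 t).div_const 2
  have hgd : ∀ t : ℝ, HasDerivAt g (A (v + t • h) h - A v h - t * B h h) t := by
    intro t
    have hline : HasDerivAt (fun t : ℝ => v + t • h) h t := by
      simpa using ((hasDerivAt_id t).smul_const h).const_add v
    have h1 : HasDerivAt (fun t : ℝ => f (v + t • h)) (A (v + t • h) h) t := by
      have hfd : HasFDerivAt f (A (v + t • h)) (v + t • h) := (hφ (v + t • h)).hasFDerivAt
      exact hfd.comp_hasDerivAt t hline
    have h2 : HasDerivAt (fun t : ℝ => t * A v h) (A v h) t := by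
      simpa using (hasDerivAt_id t).mul_const (A v h)
    have h3 : HasDerivAt (fun t : ℝ => t ^ 2 / 2 * B h h) (t * B h h) t :=
      (hsq t).mul_const (B h h)
    exact ((h1.sub_const (f v)).sub h2).sub h3
  have hbound : ∀ t ∈ Set.Icc (0 : ℝ) 1, ‖g t‖ ≤ M * ‖h‖ ^ (2 + δ) * (t ^ 2 / 2) := by
    refine fun t ht => image_norm_le_of_norm_deriv_right_le_deriv_boundary
      (B := fun t => M * ‖h‖ ^ (2 + δ) * (t ^ 2 / 2)) (B' := fun t => M * ‖h‖ ^ (2 + δ) * t)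
      (fun t _ => (hgd t).continuousAt.continuousWithinAt)
      (fun t _ => (hgd t).hasDerivWithinAt) (by simp [hg]) ?_ ?_ ht
    · exact fun t => (hsq t).const_mul _
    · intro t ht
      have e : A (v + t • h) h - A v h - t * B h h = (A (v + t • h) - A v - B (t • h)) h := by
        simp
      have hp : ‖h‖ ^ (2 + δ) = ‖h‖ ^ δ * ‖h‖ * ‖h‖ := by
        rw [add_comm, Real.rpow_add_of_nonneg (norm_nonneg _) hδ.le (by norm_num)]
        norm_num
        ring
      rw [e]
      calc _ ≤ ‖A (v + t • h) - A v - B (t • h)‖ * ‖h‖ := ContinuousLinearMap.le_opNorm _ _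
        _ ≤ M * ‖h‖ ^ δ * (t * ‖h‖) * ‖h‖ := by
          gcongr
          exact hfirst t ⟨ht.1, ht.2.le⟩
        _ = _ := by rw [hp]; ring
  have h1 := hbound 1 ⟨zero_le_one, le_rfl⟩
  have e : g 1 = taylorRem φ x v h := by
    simp [hg, taylorRem, hf, hA, hB]
  rw [e, Real.norm_eq_abs] at h1
  linarith

theorem add_three_rpow_le {a b c p : ℝ} (ha : 0 ≤ a) (hb : 0 ≤ b) (hc : 0 ≤ c) (hp : 1 ≤ p) :
    (a + b + c) ^ p ≤ 3 ^ (p - 1) * (a ^ p + b ^ p + c ^ p) := by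
  have := Real.rpow_sum_le_const_mul_sum_rpow_of_nonneg (s := Finset.univ) (f := ![a, b, c]) hp
    (by intro i _; fin_cases i <;> simpa)
  simpa [Fin.sum_univ_three] using this

theorem half_mul_three_rpow_le {δ : ℝ} (hδ : 0 < δ) :
    1 / 2 * (3 : ℝ) ^ (1 + δ) ≤ 2 ^ (1 + 2 * δ) := by
  have h1 : (3 : ℝ) ^ δ ≤ 4 ^ δ := by gcongr; norm_num
  have h2 : (2 : ℝ) ^ (1 + 2 * δ) = 2 * 4 ^ δ := by
    rw [Real.rpow_add two_pos, Real.rpow_one, Real.rpow_mul two_pos.le]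
    norm_num
  have h3 : (3 : ℝ) ^ (1 + δ) = 3 * 3 ^ δ := by
    rw [Real.rpow_add three_pos, Real.rpow_one]
  have h4 : (0 : ℝ) ≤ 3 ^ δ := by positivity
  rw [h2, h3]
  linarith

/-- Pointwise bound on the Taylor remainder for the increment of the binary interaction: `ξ`, `s`
and `y` stand for the noise, the self-propulsion and the interaction kernel, `c` for the cutoff. -/
theorem abs_taylorRem_interaction_le {d : ℕ} {δ M ε c m : ℝ} (hδ : 0 < δ) (hM : 0 ≤ M)
    (hε : 0 < ε) (hc : c ∈ Set.Icc (0 : ℝ) 1) (hm : 0 ≤ m)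
    (φ : Rd d × Rd d → ℝ) (x : Rd d)
    (hφ : Differentiable ℝ (fun v => φ (x, v)))
    (hφ' : Differentiable ℝ (fderiv ℝ (fun v => φ (x, v))))
    (hHolder : ∀ v w,
      ‖fderiv ℝ (fderiv ℝ (fun u => φ (x, u))) v -
        fderiv ℝ (fderiv ℝ (fun u => φ (x, u))) w‖ ≤ M * ‖v - w‖ ^ δ) (v ξ s y : Rd d) :
    |taylorRem φ x v (ε • (c • ξ + s + m • y))| ≤
      2 ^ (1 + 2 * δ) * M * ε ^ (2 + δ) *
        (‖ξ‖ ^ (2 + δ) + ‖s‖ ^ (2 + δ) + m ^ (2 + δ) * ‖y‖ ^ (2 + δ)) := by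
  have hn : ‖c • ξ + s + m • y‖ ≤ ‖ξ‖ + ‖s‖ + m * ‖y‖ := by
    refine (norm_add₃_le).trans ?_
    rw [norm_smul, norm_smul, Real.norm_eq_abs, Real.norm_eq_abs, abs_of_nonneg hc.1,
      abs_of_nonneg hm]
    gcongr
    exact mul_le_of_le_one_left (norm_nonneg _) hc.2
  have h3 := add_three_rpow_le (norm_nonneg ξ) (norm_nonneg s) (mul_nonneg hm (norm_nonneg y))
    (show 1 ≤ 2 + δ by linarith)
  rw [Real.mul_rpow hm (norm_nonneg y), show 2 + δ - 1 = 1 + δ by ring] at h3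
  calc _ ≤ 1 / 2 * M * ‖ε • (c • ξ + s + m • y)‖ ^ (2 + δ) :=
        abs_taylorRem_le hδ hM φ x hφ hφ' hHolder v _
    _ = 1 / 2 * M * (ε ^ (2 + δ) * ‖c • ξ + s + m • y‖ ^ (2 + δ)) := by
        rw [norm_smul, Real.norm_eq_abs, abs_of_pos hε, Real.mul_rpow hε.le (norm_nonneg _)]
    _ ≤ 1 / 2 * M * (ε ^ (2 + δ) * (3 ^ (1 + δ) *
          (‖ξ‖ ^ (2 + δ) + ‖s‖ ^ (2 + δ) + m ^ (2 + δ) * ‖y‖ ^ (2 + δ)))) := by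
        gcongr
        exact (Real.rpow_le_rpow (norm_nonneg _) hn (by linarith)).trans h3
    _ = 1 / 2 * 3 ^ (1 + δ) * (M * ε ^ (2 + δ) *
          (‖ξ‖ ^ (2 + δ) + ‖s‖ ^ (2 + δ) + m ^ (2 + δ) * ‖y‖ ^ (2 + δ))) := by ring
    _ ≤ 2 ^ (1 + 2 * δ) * (M * ε ^ (2 + δ) *
          (‖ξ‖ ^ (2 + δ) + ‖s‖ ^ (2 + δ) + m ^ (2 + δ) * ‖y‖ ^ (2 + δ))) := by
        gcongr
        exact half_mul_three_rpow_le hδ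
    _ = _ := by ring

/-- Estimate of the Taylor remainder `R^F_φ` of the follower–follower
binary interaction `v* = v + ε(θ(x)ξ + S(x,v) + m H(x,v,x̂,v̂))` in the grazing
interaction limit. -/
theorem follower_follower_taylor_remainder_bound
    {d : ℕ} (hd : 1 ≤ d) {δ M ε : ℝ}
    (hδ : δ ∈ Set.Ioc (0 : ℝ) 1) (hM : 0 ≤ M) (hε : 0 < ε)
    (μ : Measure (Rd d × Rd d)) [IsFiniteMeasure μ]
    (ν : Measure (Rd d)) [IsProbabilityMeasure ν]
    (θ : Rd d → ℝ) (hθmeas : Measurable θ) (hθ : ∀ x, θ x ∈ Set.Icc (0 : ℝ) 1)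
    (S : Rd d × Rd d → Rd d) (hSmeas : Measurable S)
    (H : Rd d × Rd d → Rd d × Rd d → Rd d) (hHmeas : Measurable (Function.uncurry H))
    (φ : Rd d × Rd d → ℝ)
    (hφ : ∀ x, Differentiable ℝ (fun v => φ (x, v)))
    (hφ' : ∀ x, Differentiable ℝ (fderiv ℝ (fun v => φ (x, v))))
    (hHolder : ∀ x v w,
      ‖fderiv ℝ (fderiv ℝ (fun u => φ (x, u))) v -
        fderiv ℝ (fderiv ℝ (fun u => φ (x, u))) w‖ ≤ M * ‖v - w‖ ^ δ)
    (hν : Integrable (fun ξ => ‖ξ‖ ^ (2 + δ)) ν)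
    (hS : Integrable (fun p => ‖S p‖ ^ (2 + δ)) μ)
    (hH : Integrable (fun pq : (Rd d × Rd d) × (Rd d × Rd d) =>
      ‖H pq.1 pq.2‖ ^ (2 + δ)) (μ.prod μ)) :
    |∫ ξ, ∫ p, ∫ q,
        taylorRem φ p.1 p.2 (ε • (θ p.1 • ξ + S p + (μ Set.univ).toReal • H p q)) ∂μ ∂μ ∂ν| ≤
      2 ^ (1 + 2 * δ) * M * ε ^ (2 + δ) *
        ((μ Set.univ).toReal ^ 2 * ∫ ξ, ‖ξ‖ ^ (2 + δ) ∂ν +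
          (μ Set.univ).toReal * ∫ p, ‖S p‖ ^ (2 + δ) ∂μ +
          (μ Set.univ).toReal ^ (2 + δ) *
            ∫ pq : (Rd d × Rd d) × (Rd d × Rd d), ‖H pq.1 pq.2‖ ^ (2 + δ) ∂(μ.prod μ)) := by
  set m : ℝ := (μ Set.univ).toReal with hm
  have hm0 : 0 ≤ m := ENNReal.toReal_nonneg
  have hmr : μ.real Set.univ = m := rfl
  have hνr : ν.real Set.univ = 1 := by simp
  set K : ℝ := 2 ^ (1 + 2 * δ) * M * ε ^ (2 + δ) with hK
  set G : Rd d × Rd d → ℝ := fun p => ∫ q, ‖H p q‖ ^ (2 + δ) ∂μ with hG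
  have hGint : Integrable G μ := hH.integral_prod_left
  have hGeq : ∫ p, G p ∂μ = ∫ pq : (Rd d × Rd d) × (Rd d × Rd d),
      ‖H pq.1 pq.2‖ ^ (2 + δ) ∂(μ.prod μ) := (integral_prod _ hH).symm
  have hin : ∀ ξ, ∀ᵐ p ∂μ, ‖∫ q, taylorRem φ p.1 p.2 (ε • (θ p.1 • ξ + S p + m • H p q)) ∂μ‖ ≤
      K * (m * ‖ξ‖ ^ (2 + δ) + m * ‖S p‖ ^ (2 + δ) + m ^ (2 + δ) * G p) := by
    intro ξ
    filter_upwards [hH.prod_right_ae] with p hp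
    have hHp := hp.const_mul (m ^ (2 + δ))
    refine (norm_integral_le_of_norm_le
      (((integrable_const (‖ξ‖ ^ (2 + δ) + ‖S p‖ ^ (2 + δ))).add hHp).const_mul K)
      (Filter.Eventually.of_forall fun q => abs_taylorRem_interaction_le hδ.1 hM hε (hθ p.1) hm0
        φ p.1 (hφ p.1) (hφ' p.1) (hHolder p.1) p.2 ξ (S p) (H p q))).trans_eq ?_
    simp only [Pi.add_apply]
    rw [integral_const_mul, integral_add (integrable_const _) hHp, integral_const,
      integral_const_mul, hmr, smul_eq_mul]
    ring
  have hmid : ∀ ξ,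
      ‖∫ p, ∫ q, taylorRem φ p.1 p.2 (ε • (θ p.1 • ξ + S p + m • H p q)) ∂μ ∂μ‖ ≤
      K * (m ^ 2 * ‖ξ‖ ^ (2 + δ) + (m * ∫ p, ‖S p‖ ^ (2 + δ) ∂μ +
        m ^ (2 + δ) * ∫ p, G p ∂μ)) := by
    intro ξ
    have hSm := hS.const_mul m
    have hGm := hGint.const_mul (m ^ (2 + δ))
    have hc : Integrable (fun _ : Rd d × Rd d => m * ‖ξ‖ ^ (2 + δ)) μ := integrable_const _
    have hcS : Integrable (fun p => m * ‖ξ‖ ^ (2 + δ) + m * ‖S p‖ ^ (2 + δ)) μ := hc.add hSm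
    refine (norm_integral_le_of_norm_le ((hcS.add hGm).const_mul K) (hin ξ)).trans_eq ?_
    simp only [Pi.add_apply]
    rw [integral_const_mul, integral_add hcS hGm, integral_add hc hSm, integral_const,
      integral_const_mul, integral_const_mul, hmr, smul_eq_mul]
    ring
  have hξm := hν.const_mul (m ^ 2)
  refine (norm_integral_le_of_norm_le ((hξm.add (integrable_const (m * ∫ p, ‖S p‖ ^ (2 + δ) ∂μ +
    m ^ (2 + δ) * ∫ p, G p ∂μ))).const_mul K) (Filter.Eventually.of_forall hmid)).trans_eq ?_
  simp only [Pi.add_apply]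
  rw [integral_const_mul, integral_add hξm (integrable_const _), integral_const,
    integral_const_mul, hνr, one_smul, hGeq]
  ring
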